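/- Let G be a weighted graph with terminal set K. If X ⊆ Y ⊆ K, then S(X) ⊆ S(Y); that is, any minimum-cardinality minimizer realizing h_K^G(X) is contained in any minimum-cardinality minimizer realizing h_K^G(Y). -/

import Mathlib

/-!
The cut function is submodular. Hence if `A` and `B` realize `h_K(X)` and `h_K(Y)` with `X ⊆ Y`,
then `A ∩ B` and `A ∪ B`, which again cut out `X` and `Y`, together cost no more than `A` and `B`,
so both are optimal. If `A` has minimum cardinality among the minimizers for `X`, then `A ∩ B`
cannot be a proper subset of `A`.
-/

open scoped Classical

/-- A weighted graph with a distinguished embedded set of terminals indexed by `κ`: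
a finite vertex type `V`, an embedding `ι : κ ↪ V` of the terminals, and a symmetric
nonnegative capacity function `c` on pairs of vertices. -/
structure WeightedGraph (κ : Type) where
  V : Type
  [fintypeV : Fintype V]
  ι : κ ↪ V
  c : V → V → ℝ
  symm : ∀ u v, c u v = c v u
  nonneg : ∀ u v, 0 ≤ c u v

namespace WeightedGraph

variable {κ : Type}

instance (G : WeightedGraph κ) : Fintype G.V := G.fintypeV

/-- The cut function `h_G(A) = Σ_{u ∈ A, v ∉ A} c(u,v)`. -/
noncomputable def cutval (G : WeightedGraph κ) (A : Finset G.V) : ℝ :=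
  ∑ u ∈ A, ∑ v ∈ Aᶜ, G.c u v

/-- The vertex sets realizing the terminal partition `(U, K \ U)`. -/
noncomputable def cutSets (G : WeightedGraph κ) (U : Finset κ) : Finset (Finset G.V) :=
  Finset.univ.filter fun A => ∀ x : κ, G.ι x ∈ A ↔ x ∈ U

theorem cutSets_nonempty (G : WeightedGraph κ) (U : Finset κ) : (G.cutSets U).Nonempty := by
  refine ⟨U.image G.ι, ?_⟩
  simp [cutSets, Finset.mem_image, G.ι.injective.eq_iff]

/-- The terminal cut function `h_K^G(U) = min { h_G(A) : A ∩ K = U }`. -/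
noncomputable def termCut (G : WeightedGraph κ) (U : Finset κ) : ℝ :=
  (G.cutSets U).inf' (G.cutSets_nonempty U) G.cutval

/-- `H` is a mimicking network for `(G, K)`: all minimum terminal cut values agree. -/
def IsMimicking (G H : WeightedGraph κ) : Prop :=
  ∀ U : Finset κ, H.termCut U = G.termCut U

/-- `H` is a quotient (contraction) of `G` along the surjection `f`: terminals map to
terminals, and capacities between distinct classes are sums of the original capacities. -/
def IsQuotient (G H : WeightedGraph κ) (f : G.V → H.V) : Prop :=
  Function.Surjective f ∧ (∀ x : κ, f (G.ι x) = H.ι x) ∧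
    ∀ y z : H.V, y ≠ z →
      H.c y z = ∑ u ∈ Finset.univ.filter (fun u => f u = y),
        ∑ v ∈ Finset.univ.filter (fun v => f v = z), G.c u v

end WeightedGraph

/-- `A` is a minimum-cardinality minimizer realizing the minimum terminal cut
`h_K^G(U)`: it induces the terminal partition `(U, K \ U)`, achieves the minimum cut
value, and has minimum cardinality among all such minimizers. -/
def WeightedGraph.IsMinCutSet {κ : Type} (G : WeightedGraph κ) (U : Finset κ)
    (A : Finset G.V) : Prop :=
  (∀ x : κ, G.ι x ∈ A ↔ x ∈ U) ∧ G.cutval A = G.termCut U ∧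
    ∀ B : Finset G.V, (∀ x : κ, G.ι x ∈ B ↔ x ∈ U) → G.cutval B = G.termCut U →
      A.card ≤ B.card

section CutPairs

variable {α : Type*} [Fintype α] [DecidableEq α]

/-- The ordered pairs that leave `A`: the directed cut of `A` in the complete digraph on `α`. The
cut function sums the capacities over it, so inequalities of cut values reduce to inclusions. -/
def cutPairs (A : Finset α) : Finset (α × α) :=
  A ×ˢ Aᶜ

theorem mem_cutPairs {A : Finset α} {e : α × α} : e ∈ cutPairs A ↔ e.1 ∈ A ∧ e.2 ∉ A := by
  simp [cutPairs]

theorem cutPairs_inter_inter_cutPairs_union (A B : Finset α) :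
    cutPairs (A ∩ B) ∩ cutPairs (A ∪ B) = cutPairs A ∩ cutPairs B := by
  grind [mem_cutPairs]

theorem cutPairs_inter_union_cutPairs_union_subset (A B : Finset α) :
    cutPairs (A ∩ B) ∪ cutPairs (A ∪ B) ⊆ cutPairs A ∪ cutPairs B := by
  grind [mem_cutPairs]

theorem sum_cutPairs_inter_add_sum_cutPairs_union_le {M : Type*} [AddCommMonoid M]
    [PartialOrder M] [IsOrderedAddMonoid M] {w : α × α → M} (hw : ∀ e, 0 ≤ w e)
    (A B : Finset α) :
    ∑ e ∈ cutPairs (A ∩ B), w e + ∑ e ∈ cutPairs (A ∪ B), w e ≤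
      ∑ e ∈ cutPairs A, w e + ∑ e ∈ cutPairs B, w e :=
  calc
    _ = ∑ e ∈ cutPairs (A ∩ B) ∪ cutPairs (A ∪ B), w e + ∑ e ∈ cutPairs A ∩ cutPairs B, w e := by
      rw [← cutPairs_inter_inter_cutPairs_union, Finset.sum_union_inter]
    _ ≤ ∑ e ∈ cutPairs A ∪ cutPairs B, w e + ∑ e ∈ cutPairs A ∩ cutPairs B, w e := by
      gcongr ?_ + _
      exact Finset.sum_le_sum_of_subset_of_nonneg
        (cutPairs_inter_union_cutPairs_union_subset A B) fun e _ _ ↦ hw e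
    _ = ∑ e ∈ cutPairs A, w e + ∑ e ∈ cutPairs B, w e := Finset.sum_union_inter

end CutPairs

namespace WeightedGraph

variable {κ : Type} {G : WeightedGraph κ} {U X Y : Finset κ} {A B : Finset G.V}

theorem mem_cutSets : A ∈ G.cutSets U ↔ ∀ x, G.ι x ∈ A ↔ x ∈ U := by
  simp [cutSets]

theorem inter_mem_cutSets_inter (hA : A ∈ G.cutSets X) (hB : B ∈ G.cutSets Y) :
    A ∩ B ∈ G.cutSets (X ∩ Y) := by
  simp_all [mem_cutSets]

theorem union_mem_cutSets_union (hA : A ∈ G.cutSets X) (hB : B ∈ G.cutSets Y) :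
    A ∪ B ∈ G.cutSets (X ∪ Y) := by
  simp_all [mem_cutSets]

theorem termCut_le_cutval (hA : A ∈ G.cutSets U) : G.termCut U ≤ G.cutval A :=
  Finset.inf'_le _ hA

theorem cutval_eq_sum_cutPairs (G : WeightedGraph κ) (A : Finset G.V) :
    G.cutval A = ∑ e ∈ cutPairs A, G.c e.1 e.2 := by
  rw [cutval, cutPairs, Finset.sum_product]

theorem cutval_inter_add_cutval_union_le (G : WeightedGraph κ) (A B : Finset G.V) :
    G.cutval (A ∩ B) + G.cutval (A ∪ B) ≤ G.cutval A + G.cutval B := by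
  simpa only [cutval_eq_sum_cutPairs] using
    sum_cutPairs_inter_add_sum_cutPairs_union_le (fun e ↦ G.nonneg e.1 e.2) A B

/-- `A` realizes the minimum terminal cut value `h_K^G(U)`. Unlike in `IsMinCutSet`, nothing is
asked of the cardinality of `A`, so that the minimizers can be combined by `∩`. -/
def IsMinimizer (G : WeightedGraph κ) (U : Finset κ) (A : Finset G.V) : Prop :=
  A ∈ G.cutSets U ∧ G.cutval A = G.termCut U

theorem IsMinimizer.inter (hXY : X ⊆ Y) (hA : G.IsMinimizer X A) (hB : G.IsMinimizer Y B) :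
    G.IsMinimizer X (A ∩ B) := by
  obtain ⟨hA_mem, hA_val⟩ := hA
  obtain ⟨hB_mem, hB_val⟩ := hB
  have inter_mem : A ∩ B ∈ G.cutSets X :=
    Finset.inter_eq_left.mpr hXY ▸ inter_mem_cutSets_inter hA_mem hB_mem
  have union_mem : A ∪ B ∈ G.cutSets Y :=
    Finset.union_eq_right.mpr hXY ▸ union_mem_cutSets_union hA_mem hB_mem
  refine ⟨inter_mem, le_antisymm ?_ (termCut_le_cutval inter_mem)⟩
  linarith [G.cutval_inter_add_cutval_union_le A B, termCut_le_cutval union_mem]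

theorem IsMinCutSet.isMinimizer (hA : G.IsMinCutSet U A) : G.IsMinimizer U A :=
  ⟨mem_cutSets.mpr hA.1, hA.2.1⟩

theorem IsMinCutSet.card_le (hA : G.IsMinCutSet U A) (hB : G.IsMinimizer U B) :
    A.card ≤ B.card :=
  hA.2.2 B (mem_cutSets.mp hB.1) hB.2

end WeightedGraph

theorem minCutSet_subset_of_subset_general {κ : Type} (G : WeightedGraph κ)
    (X Y : Finset κ) (hXY : X ⊆ Y) (SX B : Finset G.V)
    (hSX : G.IsMinCutSet X SX) (hB : G.IsMinimizer Y B) :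
    SX ⊆ B := by
  have card_le : SX.card ≤ (SX ∩ B).card := hSX.card_le (hSX.isMinimizer.inter hXY hB)
  exact Finset.inter_eq_left.mp (Finset.eq_of_subset_of_card_le Finset.inter_subset_left card_le)

/-- if `X ⊆ Y ⊆ K` then `S(X) ⊆ S(Y)` for any minimum-cardinality
minimizers `S(X)`, `S(Y)` realizing `h_K^G(X)` and `h_K^G(Y)`. -/
theorem minCutSet_subset_of_subset {κ : Type} (G : WeightedGraph κ)
    (X Y : Finset κ) (hXY : X ⊆ Y) (SX SY : Finset G.V)
    (hSX : G.IsMinCutSet X SX) (hSY : G.IsMinCutSet Y SY) :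
    SX ⊆ SY :=
  minCutSet_subset_of_subset_general G X Y hXY SX SY hSX hSY.isMinimizer
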